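/- arXiv:2501.13668 — 2 statements merged into one kernel-verified Lean document; each statement's English description precedes it below -/
import Mathlib

section
/- If the neighborhood structure 𝒩 is nontrivial, then the output map C has nontrivial kernel. Precisely: if for each subsystem q one chooses a traceless operator E_q on ℂ^{d_q}, then the operator E = E_1 ⊗ ⋯ ⊗ E_N satisfies tr(C_i E) = 0 for every i, hence C[E] = 0; choosing each E_q nonzero (possible since d_q ≥ 2) yields a nonzero element of ker C. -/
open Matrix
open scoped Classical

/-- A matrix on the multipartite space `⊗_q ℂ^{d q}` (indexed by tuples
`a : ∀ q, Fin (d q)`) is `S`-local, for a neighborhood `S ⊆ {1,…,N}`, if it has the form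
`X ⊗ I` with `X` acting on the factors in `S` and the identity on the complementary
factors. -/
def IsLocalOp {N : ℕ} {d : Fin N → ℕ} (S : Finset (Fin N))
    (M : Matrix (∀ q, Fin (d q)) (∀ q, Fin (d q)) ℂ) : Prop :=
  ∃ X : Matrix (∀ q : {q // q ∈ S}, Fin (d q)) (∀ q : {q // q ∈ S}, Fin (d q)) ℂ,
    ∀ a b : ∀ q, Fin (d q),
      M a b = if ∀ q ∉ S, a q = b q
        then X (fun q => a q) (fun q => b q) else 0

/-- The elementary tensor product operator `E₁ ⊗ ⋯ ⊗ E_N` on `⊗_q ℂ^{d q}`, built from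
operators `Efam q` on the factors `ℂ^{d q}`. -/
def tensorOp {N : ℕ} {d : Fin N → ℕ} (Efam : ∀ q, Matrix (Fin (d q)) (Fin (d q)) ℂ) :
    Matrix (∀ q, Fin (d q)) (∀ q, Fin (d q)) ℂ :=
  fun a b => ∏ q, Efam q (a q) (b q)

/-!
For a neighborhood `S` and `E = ⊗_q E_q`, splitting the tensor factors into those in `S` and those
outside it gives `tr ((X ⊗ I) E) = tr (X (⊗_{q ∈ S} E_q)) * ∏_{q ∉ S} tr E_q`. A single traceless
factor outside `S` therefore makes `E` Hilbert–Schmidt orthogonal to every `S`-local operator.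
-/

theorem trace_submatrix_equiv {m n R : Type*} [Fintype m] [Fintype n] [AddCommMonoid R]
    (A : Matrix n n R) (e : m ≃ n) : (A.submatrix e e).trace = A.trace :=
  e.sum_comp fun x => A x x

section PiKronecker

open scoped Kronecker

variable {κ R : Type*} [Fintype κ]

/-- The Kronecker product `⊗_q A_q` of a finite family of matrices, with rows and columns indexed
by tuples. It extends `tensorOp` to rectangular matrices, arbitrary index types and arbitrary
coefficients. -/
def piKronecker [CommMonoid R] {m n : κ → Type*} (A : ∀ q, Matrix (m q) (n q) R) :
    Matrix (∀ q, m q) (∀ q, n q) R :=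
  of fun a b => ∏ q, A q (a q) (b q)

theorem piKronecker_eq_zero_iff [CommMonoidWithZero R] [Nontrivial R] [NoZeroDivisors R]
    {m n : κ → Type*} (A : ∀ q, Matrix (m q) (n q) R) :
    piKronecker A = 0 ↔ ∃ q, A q = 0 := by
  constructor
  · contrapose!
    intro hA
    have hentry : ∀ q, ∃ x y, A q x y ≠ 0 := fun q => by
      simpa [← Matrix.ext_iff] using hA q
    choose a b hab using hentry
    exact fun h => Finset.prod_ne_zero_iff.2 (fun q _ => hab q) (congr_fun₂ h a b)
  · rintro ⟨q, hq⟩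
    ext a b
    exact Finset.prod_eq_zero (Finset.mem_univ q) (congr_fun₂ hq _ _)

theorem piKronecker_eq_submatrix_kronecker [CommMonoid R] {m n : κ → Type*}
    (p : κ → Prop) [DecidablePred p] (A : ∀ q, Matrix (m q) (n q) R) :
    piKronecker A =
      (piKronecker (fun q : {q // p q} => A q) ⊗ₖ
        piKronecker fun q : {q // ¬p q} => A q).submatrix
        (Equiv.piEquivPiSubtypeProd p m) (Equiv.piEquivPiSubtypeProd p n) := by
  ext a b
  exact (Fintype.prod_subtype_mul_prod_subtype p fun q => A q (a q) (b q)).symm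

/-- The operator `X ⊗ I`, where `X` acts on the tensor factors satisfying `p` and the identity on
the remaining ones. -/
def ampliation [MulZeroOneClass R] {n : κ → Type*} [∀ q, DecidableEq (n q)]
    (p : κ → Prop) [DecidablePred p]
    (X : Matrix (∀ q : {q // p q}, n q) (∀ q : {q // p q}, n q) R) :
    Matrix (∀ q, n q) (∀ q, n q) R :=
  (X ⊗ₖ (1 : Matrix (∀ q : {q // ¬p q}, n q) (∀ q : {q // ¬p q}, n q) R)).submatrix
    (Equiv.piEquivPiSubtypeProd p n) (Equiv.piEquivPiSubtypeProd p n)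

variable [CommSemiring R] [DecidableEq κ] {n : κ → Type*} [∀ q, Fintype (n q)]

theorem trace_piKronecker (A : ∀ q, Matrix (n q) (n q) R) :
    (piKronecker A).trace = ∏ q, (A q).trace :=
  (Fintype.prod_sum fun q x => A q x x).symm

variable [∀ q, DecidableEq (n q)]

theorem trace_ampliation_mul_piKronecker (p : κ → Prop) [DecidablePred p]
    (X : Matrix (∀ q : {q // p q}, n q) (∀ q : {q // p q}, n q) R)
    (E : ∀ q, Matrix (n q) (n q) R) :
    (ampliation p X * piKronecker E).trace =
      (X * piKronecker fun q : {q // p q} => E q).trace * ∏ q : {q // ¬p q}, (E q).trace := by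
  rw [piKronecker_eq_submatrix_kronecker p E, ampliation, submatrix_mul_equiv,
    ← mul_kronecker_mul, one_mul, trace_submatrix_equiv, trace_kronecker, trace_piKronecker]

theorem trace_ampliation_mul_piKronecker_eq_zero {p : κ → Prop} [DecidablePred p]
    (X : Matrix (∀ q : {q // p q}, n q) (∀ q : {q // p q}, n q) R)
    {E : ∀ q, Matrix (n q) (n q) R} {q : κ} (hq : ¬p q) (hE : (E q).trace = 0) :
    (ampliation p X * piKronecker E).trace = 0 := by
  rw [trace_ampliation_mul_piKronecker, Finset.prod_eq_zero (Finset.mem_univ ⟨q, hq⟩) hE, mul_zero]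

theorem nontrivial_neighborhood_output_map_nontrivial_kernel_general
    [Nontrivial R] [NoZeroDivisors R]
    {σ ι : Type*} [Fintype ι] (S : σ → Finset κ)
    (C : ι → Matrix (∀ q, n q) (∀ q, n q) R)
    (hlocal : ∀ i, ∃ k, ∃ X, ampliation (· ∈ S k) X = C i)
    (E : ∀ q, Matrix (n q) (n q) R)
    (htr : ∀ k, ∃ q ∉ S k, (E q).trace = 0) :
    (∀ i, (C i * piKronecker E).trace = 0) ∧
    (∑ i, (C i * piKronecker E).trace • C i = 0) ∧
    ((∀ q, E q ≠ 0) → piKronecker E ≠ 0) := by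
  have horthogonal : ∀ i, (C i * piKronecker E).trace = 0 := fun i => by
    obtain ⟨k, X, hX⟩ := hlocal i
    obtain ⟨q, hq, hEq⟩ := htr k
    rw [← hX]
    exact trace_ampliation_mul_piKronecker_eq_zero X hq hEq
  refine ⟨horthogonal, ?_, fun hE => ?_⟩
  · simp only [horthogonal, zero_smul, Finset.sum_const_zero]
  · simpa [piKronecker_eq_zero_iff] using hE

end PiKronecker

theorem tensorOp_eq_piKronecker {N : ℕ} {d : Fin N → ℕ}
    (Efam : ∀ q, Matrix (Fin (d q)) (Fin (d q)) ℂ) : tensorOp Efam = piKronecker Efam :=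
  rfl

theorem isLocalOp_iff_exists_ampliation_eq {N : ℕ} {d : Fin N → ℕ} (S : Finset (Fin N))
    (M : Matrix (∀ q, Fin (d q)) (∀ q, Fin (d q)) ℂ) :
    IsLocalOp S M ↔ ∃ X, ampliation (· ∈ S) X = M := by
  refine exists_congr fun X => ?_
  simp [← Matrix.ext_iff, ampliation, one_apply, funext_iff, eq_comm]

/-- Let `H = ⊗_{q=1}^N ℂ^{d_q}` with `N ≥ 2` and `d_q ≥ 2`, let
`𝒩 = {S k}` be a nontrivial neighborhood structure (no `S k` is all of `{1,…,N}`), and let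
`{C i}` be a family of `𝒩`-local, Hermitian, Hilbert–Schmidt orthonormal operators defining
the output map `C[ρ] = Σ_i tr(C_i ρ) • C_i`.  If for each subsystem `q` one chooses a
traceless operator `E_q` on `ℂ^{d_q}`, then `E = E₁ ⊗ ⋯ ⊗ E_N` satisfies `tr(C_i E) = 0`
for every `i`, hence `C[E] = 0`; choosing each `E_q` nonzero (possible since `d_q ≥ 2`)
yields a nonzero element of `ker C`. -/
theorem nontrivial_neighborhood_output_map_nontrivial_kernel
    {N M : ℕ} {d : Fin N → ℕ} (hN : 2 ≤ N) (hd : ∀ q, 2 ≤ d q)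
    (S : Fin M → Finset (Fin N)) (hnontriv : ∀ k, S k ≠ Finset.univ)
    {ι : Type*} [Fintype ι]
    (C : ι → Matrix (∀ q, Fin (d q)) (∀ q, Fin (d q)) ℂ)
    (hlocal : ∀ i, ∃ k, IsLocalOp (S k) (C i))
    (hherm : ∀ i, (C i).IsHermitian)
    (horth : ∀ i j, ((C i)ᴴ * C j).trace = if i = j then 1 else 0)
    (Efam : ∀ q, Matrix (Fin (d q)) (Fin (d q)) ℂ)
    (htr : ∀ q, (Efam q).trace = 0) :
    (∀ i, (C i * tensorOp Efam).trace = 0) ∧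
    (∑ i, ((C i * tensorOp Efam).trace) • C i = 0) ∧
    ((∀ q, Efam q ≠ 0) → tensorOp Efam ≠ 0) := by
  have hoff : ∀ k, ∃ q, q ∉ S k := by simpa [Finset.eq_univ_iff_forall] using hnontriv
  rw [tensorOp_eq_piKronecker]
  exact nontrivial_neighborhood_output_map_nontrivial_kernel_general S C
    (fun i => (hlocal i).imp fun k => (isLocalOp_iff_exists_ampliation_eq (S k) (C i)).1) Efam
    fun k => (hoff k).imp fun q hq => ⟨hq, htr q⟩
end

section
/- For any system with a nontrivial neighborhood structure, full-rank states are not UDA: if 𝒩 is nontrivial and ρ is a positive-definite density matrix on H, then there exists a density matrix σ ≠ ρ having the same marginals as ρ, i.e. tr((X ⊗ I_{𝒩̄_k}) σ) = tr((X ⊗ I_{𝒩̄_k}) ρ) for every neighborhood 𝒩_k ∈ 𝒩 and every operator X on H_{𝒩_k}. -/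
open Matrix
open scoped Classical ComplexOrder

/-!
Every Hermitian matrix of trace one close enough to a positive definite density matrix `ρ` is again
a density matrix, so `ρ` can be moved along any Hermitian `K ≠ 0` of trace zero, and the move is
invisible to all observables `A` with `tr (A K) = 0`. If the tuples `a` and `b` differ in every
coordinate, an operator `X ⊗ I` acting as the identity on at least one factor has vanishing `(a, b)`
and `(b, a)` entries, so `K = |a⟩⟨b| + |b⟩⟨a|` is invisible to all proper neighborhoods at once.
-/

theorem exists_pos_isStrictlyPositive_add_smul {A : Type*} [CStarAlgebra A] [PartialOrder A]
    [StarOrderedRing A] {a b : A} (ha : IsStrictlyPositive a) (hb : IsSelfAdjoint b) :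
    ∃ t : ℝ, 0 < t ∧ IsStrictlyPositive (a + t • b) := by
  rcases subsingleton_or_nontrivial A with _ | _
  · exact ⟨1, one_pos, by rwa [Subsingleton.elim (a + (1 : ℝ) • b) a]⟩
  obtain ⟨c, hc, hca⟩ : ∃ c > 0, algebraMap ℝ A c ≤ a :=
    (CFC.exists_pos_algebraMap_le_iff ha.isSelfAdjoint).2 fun _ hx => ha.spectrum_pos hx
  have hnorm : 0 < ‖b‖ + 1 := by positivity
  let t := c / (‖b‖ + 1)
  have ht : 0 < t := div_pos hc hnorm
  have hc_eq : c = t * (‖b‖ + 1) := (div_mul_cancel₀ c hnorm.ne').symm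
  refine ⟨t, ht, (isStrictlyPositive_algebraMap ht).of_le ?_⟩
  calc algebraMap ℝ A t = algebraMap ℝ A c + t • -algebraMap ℝ A ‖b‖ := by
        simp only [hc_eq, Algebra.algebraMap_eq_smul_one]
        module
    _ ≤ a + t • b :=
        add_le_add hca (smul_le_smul_of_nonneg_left hb.neg_algebraMap_norm_le_self ht.le)

open scoped Matrix.Norms.L2Operator MatrixOrder in
theorem exists_pos_posDef_add_smul {n : Type*} [Finite n] {ρ K : Matrix n n ℂ} (hρ : ρ.PosDef)
    (hK : K.IsHermitian) : ∃ t : ℝ, 0 < t ∧ (ρ + t • K).PosDef := by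
  cases nonempty_fintype n
  simpa only [isStrictlyPositive_iff_posDef] using
    exists_pos_isStrictlyPositive_add_smul hρ.isStrictlyPositive hK.isSelfAdjoint

theorem exists_posDef_ne_forall_trace_mul_eq {n : Type*} [Fintype n] {ρ K : Matrix n n ℂ}
    (hρ : ρ.PosDef) (hK : K.IsHermitian) (hK0 : K ≠ 0) :
    ∃ σ : Matrix n n ℂ, σ.PosDef ∧ σ ≠ ρ ∧
      ∀ A : Matrix n n ℂ, (A * K).trace = 0 → (A * σ).trace = (A * ρ).trace := by
  obtain ⟨t, ht, hσ⟩ := exists_pos_posDef_add_smul hρ hK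
  refine ⟨ρ + t • K, hσ, ?_, fun A hA => ?_⟩
  · simpa only [ne_eq, add_eq_left] using smul_ne_zero ht.ne' hK0
  · rw [mul_add, trace_add, mul_smul_comm, trace_smul, hA, smul_zero, add_zero]

section Coherence

variable {n R : Type*} [DecidableEq n]

/-- The operator `|a⟩⟨b| + |b⟩⟨a|`, the Hermitian direction changing only the real part of the
coherence between the basis vectors `a` and `b`. -/
def coherence [Semiring R] (a b : n) : Matrix n n R :=
  single a b 1 + single b a 1

theorem coherence_isHermitian [Semiring R] [StarRing R] (a b : n) :
    (coherence a b : Matrix n n R).IsHermitian := by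
  simp only [IsHermitian, coherence, conjTranspose_add, conjTranspose_single, star_one, add_comm]

theorem coherence_ne_zero [Semiring R] [Nontrivial R] {a b : n} (hab : a ≠ b) :
    (coherence a b : Matrix n n R) ≠ 0 := fun h => by
  simpa [coherence, hab] using congr_fun₂ h a b

theorem trace_mul_coherence [Semiring R] [Fintype n] (A : Matrix n n R) (a b : n) :
    (A * coherence a b).trace = A b a + A a b := by
  simp only [coherence, mul_add, trace_add, trace_mul_single, MulOpposite.op_one, one_smul]

end Coherence

namespace IsLocalOp

variable {N : ℕ} {d : Fin N → ℕ} {S : Finset (Fin N)}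
  {A : Matrix (∀ q, Fin (d q)) (∀ q, Fin (d q)) ℂ} {a b : ∀ q, Fin (d q)}

theorem apply_eq_zero (hA : IsLocalOp S A) {q : Fin N} (hq : q ∉ S) (hab : a q ≠ b q) :
    A a b = 0 := by
  obtain ⟨X, hX⟩ := hA
  rw [hX, if_neg fun h => hab (h q hq)]

theorem trace_mul_coherence_eq_zero (hA : IsLocalOp S A) (hS : S ≠ Finset.univ)
    (hab : ∀ q, a q ≠ b q) : (A * coherence a b).trace = 0 := by
  obtain ⟨q, hq⟩ : ∃ q, q ∉ S := by
    simpa only [ne_eq, Finset.eq_univ_iff_forall, not_forall] using hS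
  rw [trace_mul_coherence, hA.apply_eq_zero hq (hab q).symm, hA.apply_eq_zero hq (hab q), add_zero]

end IsLocalOp

/-- For any system with a nontrivial neighborhood structure, full-rank
states are not UDA: on `H = ⊗_{q=1}^N ℂ^{d_q}` (`N ≥ 2`, `d_q ≥ 2`), if no neighborhood
`S k` equals `{1,…,N}` and `ρ` is a positive-definite density matrix, then there exists a
density matrix `σ ≠ ρ` with the same marginals as `ρ`, i.e.
`tr((X ⊗ I) σ) = tr((X ⊗ I) ρ)` for every neighborhood `S k` and every `𝒩`-local operator
`X ⊗ I` supported on `S k`. -/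
theorem fullrank_states_not_UDA
    {N M : ℕ} {d : Fin N → ℕ} (hN : 2 ≤ N) (hd : ∀ q, 2 ≤ d q)
    (S : Fin M → Finset (Fin N)) (hnontriv : ∀ k, S k ≠ Finset.univ)
    (ρ : Matrix (∀ q, Fin (d q)) (∀ q, Fin (d q)) ℂ)
    (hρ : ρ.PosDef) (hρtr : ρ.trace = 1) :
    ∃ σ : Matrix (∀ q, Fin (d q)) (∀ q, Fin (d q)) ℂ,
      σ.PosSemidef ∧ σ.trace = 1 ∧ σ ≠ ρ ∧
      ∀ (k : Fin M) (A : Matrix (∀ q, Fin (d q)) (∀ q, Fin (d q)) ℂ),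
        IsLocalOp (S k) A → (A * σ).trace = (A * ρ).trace := by
  have hd' : ∀ q, Nontrivial (Fin (d q)) := fun q => Fin.nontrivial_iff_two_le.2 (hd q)
  choose a b hab using fun q => exists_pair_ne (Fin (d q))
  have hne : a ≠ b := Function.ne_iff.2 ⟨⟨0, by omega⟩, hab _⟩
  obtain ⟨σ, hσ, hσρ, hσtr⟩ := exists_posDef_ne_forall_trace_mul_eq hρ
    (coherence_isHermitian a b) (coherence_ne_zero hne)
  have htrace : σ.trace = ρ.trace := by
    simpa only [one_mul] using
      hσtr 1 (by rw [trace_mul_coherence, one_apply_ne hne.symm, one_apply_ne hne, add_zero])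
  exact ⟨σ, hσ.posSemidef, htrace.trans hρtr, hσρ, fun k A hA =>
    hσtr A (hA.trace_mul_coherence_eq_zero (hnontriv k) hab)⟩
end
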